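/- For every integer t ≥ 2, the chain C_t of length t satisfies c_⋆(C_t) = log(t+1)/t; moreover the maximum in the definition of c_⋆(C_t) is attained at the uniform weighting u = (1/(t+1), …, 1/(t+1)) ∈ Δ_{t+1} (so C_t is uniformly balanced, i.e. c_⋆(C_t) = log(a(C_t))/|C_t|). -/

import Mathlib

open Classical in
/-- The finset of all antichains (including the empty antichain) of a finite poset `P`. -/
noncomputable def antichains (P : Type*) [Fintype P] [PartialOrder P] : Finset (Finset P) :=
  Finset.univ.filter (fun A => IsAntichain (· ≤ ·) (A : Set P))

/-- The upper shadow `∂_Q S` of an antichain `S` of `P` inside a subset `Q ⊆ P`. -/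
def upperShadow {P : Type*} [PartialOrder P] (Q : Set P) (S : Set P) : Set P :=
  {y | y ∈ Q ∧ (∃ x ∈ S, x ≤ y) ∧ ∀ z ∈ Q, z < y → ∀ x ∈ S, ¬ x ≤ z}

open Classical in
/-- The antichains of the subposet `Q ⊆ P`, i.e. antichains of `P` contained in `Q`. -/
noncomputable def antichainsIn {P : Type*} [Fintype P] [PartialOrder P] (Q : Set P) :
    Finset (Finset P) :=
  (antichains P).filter (fun A => (A : Set P) ⊆ Q)

/-- A weighting `α ∈ Δ_{a(P)}`: a nonnegative function on the antichains of `P`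
(extended by `0` off the antichains) summing to `1`. -/
def IsWeighting {P : Type*} [Fintype P] [PartialOrder P] (α : Finset P → ℝ) : Prop :=
  (∀ A ∈ antichains P, 0 ≤ α A) ∧ (∀ A ∉ antichains P, α A = 0) ∧
    ∑ A ∈ antichains P, α A = 1

open Classical in
/-- The shadow weighting `∂_Q(α)`: the coordinate of `∂_Q(α)` at an antichain `T` of `Q`
is the sum of `α` over all antichains of `P` whose upper shadow in `Q` is `T`. -/
noncomputable def shadowWeight {P : Type*} [Fintype P] [PartialOrder P]
    (α : Finset P → ℝ) (Q : Set P) (T : Finset P) : ℝ :=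
  ∑ A ∈ (antichains P).filter (fun B : Finset P => upperShadow Q (B : Set P) = (T : Set P)), α A

/-- The critical exponent `c_{α,P}(Q) = H_{a(Q)}(∂_Q(α)) / |Q|` of a subposet `Q` of `P`
with respect to a weighting `α` (natural logarithm; `0 log 0 = 0`). -/
noncomputable def critExp {P : Type*} [Fintype P] [PartialOrder P]
    (α : Finset P → ℝ) (Q : Set P) : ℝ :=
  (∑ T ∈ antichainsIn Q, -(shadowWeight α Q T * Real.log (shadowWeight α Q T))) /
    (Q.ncard : ℝ)

/-- The critical exponent `c_⋆(P) = max_{α ∈ Δ_{a(P)}} min_{∅ ≠ Q ⊆ P} c_{α,P}(Q)`,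
expressed as `sup {c ≥ 0 : ∃ α ∈ Δ_{a(P)}, ∀ ∅ ≠ Q ⊆ P, c ≤ c_{α,P}(Q)}`. -/
noncomputable def critStar (P : Type*) [Fintype P] [PartialOrder P] : ℝ :=
  sSup {c : ℝ | 0 ≤ c ∧ ∃ α : Finset P → ℝ, IsWeighting α ∧
    ∀ Q : Set P, Q.Nonempty → c ≤ critExp α Q}

/-!
A weighting attains critical exponent at most `log a(P) / |P|` on `Q = P`, because the entropy of a
probability vector with `a(P)` entries is at most `log a(P)`. For the uniform weighting of a chain
this is the worst `Q`: every antichain of `Q` is its own upper shadow in `Q`, so all shadow weights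
lie in `[1 / a(P), 1]`, where the concave function `-x log x` dominates its chord. Summing the chord
over the `a(Q)` antichains of `Q` bounds the entropy below by
`log a(P) / (a(P) - 1) * (a(Q) - 1)`, and on chains `a - 1` is the cardinality.
-/

open Real

/-! ### Entropy of a finite probability vector -/

section Entropy

variable {ι : Type*} {s : Finset ι} {w : ι → ℝ}

theorem negMulLog_inv (x : ℝ) : negMulLog x⁻¹ = x⁻¹ * log x := by
  simp [negMulLog]

theorem sum_negMulLog_le_log_card (h_nonneg : ∀ i ∈ s, 0 ≤ w i) (h_sum : ∑ i ∈ s, w i = 1) :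
    ∑ i ∈ s, negMulLog (w i) ≤ log s.card := by
  have hs : s.Nonempty := Finset.nonempty_of_sum_ne_zero (h_sum.trans_ne one_ne_zero)
  have hcard : (0 : ℝ) < s.card := by exact_mod_cast hs.card_pos
  have jensen : ∑ i ∈ s, (s.card : ℝ)⁻¹ • negMulLog (w i) ≤
      negMulLog (∑ i ∈ s, (s.card : ℝ)⁻¹ • w i) :=
    concaveOn_negMulLog.le_map_sum (fun _ _ => by positivity) (by simp [hcard.ne']) h_nonneg
  rw [← Finset.smul_sum, ← Finset.smul_sum, h_sum, smul_eq_mul, smul_eq_mul, mul_one,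
    negMulLog_inv] at jensen
  exact le_of_mul_le_mul_left jensen (inv_pos.2 hcard)

theorem negMulLog_mul_one_sub_le {a x : ℝ} (ha : 0 ≤ a) (hax : a ≤ x) (hx : x ≤ 1) :
    negMulLog a * (1 - x) ≤ negMulLog x * (1 - a) := by
  rcases hax.eq_or_lt with rfl | hax
  · exact le_rfl
  rcases hx.eq_or_lt with rfl | hx
  · simp
  have chord := concaveOn_negMulLog.neg.secant_mono_aux1 (Set.mem_Ici.2 ha)
    (Set.mem_Ici.2 zero_le_one) hax hx
  simp only [Pi.neg_apply, negMulLog_one] at chord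
  linarith

theorem negMulLog_mul_card_sub_one_le {a : ℝ} (ha : 0 ≤ a) (h_le : ∀ i ∈ s, a ≤ w i)
    (h_sum : ∑ i ∈ s, w i = 1) :
    negMulLog a * (s.card - 1) ≤ (∑ i ∈ s, negMulLog (w i)) * (1 - a) := by
  have h_le_one : ∀ i ∈ s, w i ≤ 1 := fun i hi =>
    h_sum ▸ Finset.single_le_sum (fun j hj => ha.trans (h_le j hj)) hi
  calc negMulLog a * (s.card - 1)
      = ∑ i ∈ s, negMulLog a * (1 - w i) := by
        rw [← Finset.mul_sum, Finset.sum_sub_distrib, h_sum, Finset.sum_const, nsmul_one]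
    _ ≤ ∑ i ∈ s, negMulLog (w i) * (1 - a) :=
        Finset.sum_le_sum fun i hi => negMulLog_mul_one_sub_le ha (h_le i hi) (h_le_one i hi)
    _ = (∑ i ∈ s, negMulLog (w i)) * (1 - a) := (Finset.sum_mul ..).symm

end Entropy

/-! ### Antichains and upper shadows -/

section UpperShadow

variable {P : Type*} [PartialOrder P]

theorem upperShadow_subset (Q S : Set P) : upperShadow Q S ⊆ Q :=
  fun _ hy => hy.1

theorem isAntichain_upperShadow (Q S : Set P) : IsAntichain (· ≤ ·) (upperShadow Q S) := by
  rintro y ⟨hyQ, ⟨x, hxS, hxy⟩, -⟩ z ⟨-, -, hz_min⟩ hyz hle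
  exact hz_min y hyQ (hle.lt_of_ne hyz) x hxS hxy

theorem upperShadow_eq_self {Q S : Set P} (hS : IsAntichain (· ≤ ·) S) (hSQ : S ⊆ Q) :
    upperShadow Q S = S := by
  ext y
  constructor
  · rintro ⟨-, ⟨x, hxS, hxy⟩, hy_min⟩
    rcases hxy.eq_or_lt with rfl | hlt
    · exact hxS
    · exact absurd le_rfl (hy_min x (hSQ hxS) hlt x hxS)
  · intro hyS
    refine ⟨hSQ hyS, ⟨y, hyS, le_rfl⟩, fun z _ hzy x hxS hxz => ?_⟩
    exact hS.not_lt hxS hyS (hxz.trans_lt hzy)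

end UpperShadow

section Antichains

variable {P : Type*} [Fintype P] [PartialOrder P] {Q : Set P} {A : Finset P}

theorem mem_antichains : A ∈ antichains P ↔ IsAntichain (· ≤ ·) (A : Set P) := by
  simp only [antichains, Finset.mem_filter, Finset.mem_univ, true_and]

theorem mem_antichainsIn :
    A ∈ antichainsIn Q ↔ IsAntichain (· ≤ ·) (A : Set P) ∧ (A : Set P) ⊆ Q := by
  simp only [antichainsIn, Finset.mem_filter, mem_antichains]

theorem antichainsIn_univ : antichainsIn (Set.univ : Set P) = antichains P := by
  ext A
  simp only [mem_antichainsIn, mem_antichains, Set.subset_univ, and_true]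

theorem card_antichains_pos : 0 < (antichains P).card :=
  Finset.card_pos.2 ⟨∅, mem_antichains.2 (by simp)⟩

theorem card_antichainsIn_of_isChain (hQ : IsChain (· ≤ ·) Q) :
    (antichainsIn Q).card = Q.ncard + 1 := by
  classical
  have h_eq : antichainsIn Q = insert ∅ (Q.toFinset.image singleton) := by
    ext A
    simp only [mem_antichainsIn, Finset.mem_insert, Finset.mem_image, Set.mem_toFinset]
    constructor
    · rintro ⟨hA, hAQ⟩
      have hA_sub : (A : Set P).Subsingleton :=
        subsingleton_of_isChain_of_isAntichain (hQ.mono hAQ) hA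
      refine A.eq_empty_or_nonempty.imp_right fun ⟨x, hx⟩ => ⟨x, hAQ hx, ?_⟩
      exact Finset.coe_injective (by simpa using (hA_sub.eq_singleton_of_mem hx).symm)
    · rintro (rfl | ⟨x, hx, rfl⟩)
      · simp
      · simpa using hx
  rw [h_eq, Finset.card_insert_of_notMem (by simp),
    Finset.card_image_of_injective _ Finset.singleton_injective, Set.ncard_eq_toFinset_card']

end Antichains

/-! ### Shadow weights and critical exponents -/

section Weighting

variable {P : Type*} [Fintype P] [PartialOrder P] {α : Finset P → ℝ} {Q : Set P}

theorem sum_shadowWeight (α : Finset P → ℝ) (Q : Set P) :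
    ∑ T ∈ antichainsIn Q, shadowWeight α Q T = ∑ A ∈ antichains P, α A := by
  classical
  have h_maps : ∀ A ∈ antichains P, (upperShadow Q (A : Set P)).toFinset ∈ antichainsIn Q := by
    intro A _
    rw [mem_antichainsIn, Set.coe_toFinset]
    exact ⟨isAntichain_upperShadow Q A, upperShadow_subset Q A⟩
  rw [← Finset.sum_fiberwise_of_maps_to h_maps α]
  simp only [shadowWeight, ← Finset.coe_inj, Set.coe_toFinset]

theorem IsWeighting.sum_shadowWeight_eq_one (hα : IsWeighting α) (Q : Set P) :
    ∑ T ∈ antichainsIn Q, shadowWeight α Q T = 1 :=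
  (sum_shadowWeight α Q).trans hα.2.2

theorem IsWeighting.shadowWeight_nonneg (hα : IsWeighting α) (Q : Set P) (T : Finset P) :
    0 ≤ shadowWeight α Q T :=
  Finset.sum_nonneg fun A hA => hα.1 A (Finset.mem_of_mem_filter A hA)

theorem IsWeighting.le_shadowWeight (hα : IsWeighting α) {T : Finset P}
    (hT : T ∈ antichainsIn Q) : α T ≤ shadowWeight α Q T := by
  obtain ⟨hT_anti, hTQ⟩ := mem_antichainsIn.1 hT
  exact Finset.single_le_sum (fun A hA => hα.1 A (Finset.mem_of_mem_filter A hA))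
    (Finset.mem_filter.2 ⟨mem_antichains.2 hT_anti, upperShadow_eq_self hT_anti hTQ⟩)

theorem critExp_eq_sum_negMulLog_div (α : Finset P → ℝ) (Q : Set P) :
    critExp α Q = (∑ T ∈ antichainsIn Q, negMulLog (shadowWeight α Q T)) / Q.ncard := by
  simp only [critExp, negMulLog_eq_neg]

theorem IsWeighting.critExp_univ_le (hα : IsWeighting α) :
    critExp α Set.univ ≤ log (antichains P).card / Fintype.card P := by
  have h_entropy := sum_negMulLog_le_log_card (fun T _ => hα.shadowWeight_nonneg Set.univ T)
    (hα.sum_shadowWeight_eq_one Set.univ)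
  rw [antichainsIn_univ] at h_entropy
  rw [critExp_eq_sum_negMulLog_div, antichainsIn_univ, Set.ncard_univ, Nat.card_eq_fintype_card]
  gcongr

theorem IsWeighting.critStar_eq_of_forall_le_critExp [Nonempty P] (hα : IsWeighting α)
    (h_le : ∀ Q : Set P, Q.Nonempty → log (antichains P).card / Fintype.card P ≤ critExp α Q) :
    critStar P = log (antichains P).card / Fintype.card P := by
  refine IsGreatest.csSup_eq ⟨⟨by positivity, α, hα, h_le⟩, ?_⟩
  rintro c ⟨-, β, hβ, hc⟩
  exact (hc Set.univ Set.univ_nonempty).trans hβ.critExp_univ_le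

theorem IsWeighting.sInf_critExp_eq_of_forall_le_critExp [Nonempty P] (hα : IsWeighting α)
    (h_le : ∀ Q : Set P, Q.Nonempty → log (antichains P).card / Fintype.card P ≤ critExp α Q) :
    sInf {v : ℝ | ∃ Q : Set P, Q.Nonempty ∧ v = critExp α Q} =
      log (antichains P).card / Fintype.card P := by
  refine IsLeast.csInf_eq ⟨⟨Set.univ, Set.univ_nonempty, ?_⟩, ?_⟩
  · exact (h_le Set.univ Set.univ_nonempty).antisymm hα.critExp_univ_le
  · rintro v ⟨Q, hQ, rfl⟩
    exact h_le Q hQ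

end Weighting

/-! ### The uniform weighting -/

open Classical in
/-- The uniform weighting `u = (1 / a(P), …, 1 / a(P))` of a finite poset `P`, extended by `0` to
the finsets that are not antichains, as `IsWeighting` demands. -/
noncomputable def uniformWeighting (P : Type*) [Fintype P] [PartialOrder P] (A : Finset P) : ℝ :=
  if A ∈ antichains P then ((antichains P).card : ℝ)⁻¹ else 0

section UniformWeighting

variable {P : Type*} [Fintype P] [PartialOrder P]

theorem uniformWeighting_of_mem {A : Finset P} (hA : A ∈ antichains P) :
    uniformWeighting P A = ((antichains P).card : ℝ)⁻¹ :=
  if_pos hA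

theorem isWeighting_uniformWeighting : IsWeighting (uniformWeighting P) := by
  refine ⟨fun A hA => ?_, fun A hA => if_neg hA, ?_⟩
  · rw [uniformWeighting_of_mem hA]
    positivity
  · have h_ne : ((antichains P).card : ℝ) ≠ 0 := by exact_mod_cast card_antichains_pos.ne'
    rw [Finset.sum_congr rfl fun A => uniformWeighting_of_mem, Finset.sum_const, nsmul_eq_mul,
      mul_inv_cancel₀ h_ne]

theorem log_card_antichains_mul_le_sum_negMulLog (Q : Set P) :
    log (antichains P).card * ((antichainsIn Q).card - 1) ≤
      (∑ T ∈ antichainsIn Q, negMulLog (shadowWeight (uniformWeighting P) Q T)) *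
        ((antichains P).card - 1) := by
  set n : ℝ := ((antichains P).card : ℝ)
  set H := ∑ T ∈ antichainsIn Q, negMulLog (shadowWeight (uniformWeighting P) Q T)
  have hn_pos : 0 < n := Nat.cast_pos.2 card_antichains_pos
  have h_le : ∀ T ∈ antichainsIn Q, n⁻¹ ≤ shadowWeight (uniformWeighting P) Q T := fun T hT =>
    uniformWeighting_of_mem (mem_antichains.2 (mem_antichainsIn.1 hT).1) ▸
      isWeighting_uniformWeighting.le_shadowWeight hT
  calc log n * ((antichainsIn Q).card - 1)
      = n * (negMulLog n⁻¹ * ((antichainsIn Q).card - 1)) := by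
        rw [negMulLog_inv]
        field_simp
    _ ≤ n * (H * (1 - n⁻¹)) := by
        refine mul_le_mul_of_nonneg_left ?_ hn_pos.le
        exact negMulLog_mul_card_sub_one_le (inv_nonneg.2 hn_pos.le) h_le
          (isWeighting_uniformWeighting.sum_shadowWeight_eq_one Q)
    _ = H * (n - 1) := by field_simp

end UniformWeighting

section Chain

variable {P : Type*} [Fintype P] [LinearOrder P]

theorem card_antichainsIn_of_linearOrder (Q : Set P) : (antichainsIn Q).card = Q.ncard + 1 :=
  card_antichainsIn_of_isChain (isChain_of_trichotomous Q)

theorem card_antichains_of_linearOrder : (antichains P).card = Fintype.card P + 1 := by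
  rw [← antichainsIn_univ, card_antichainsIn_of_linearOrder, Set.ncard_univ,
    Nat.card_eq_fintype_card]

theorem uniformWeighting_of_linearOrder :
    uniformWeighting P =
      fun A => if A ∈ antichains P then 1 / ((Fintype.card P : ℝ) + 1) else 0 := by
  ext A
  simp [uniformWeighting, card_antichains_of_linearOrder]

theorem log_card_antichains_div_le_critExp {Q : Set P} (hQ : Q.Nonempty) :
    log (antichains P).card / Fintype.card P ≤ critExp (uniformWeighting P) Q := by
  have hQ_pos : (0 : ℝ) < Q.ncard := by exact_mod_cast (Set.ncard_pos (Set.toFinite Q)).2 hQ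
  have hP_pos : (0 : ℝ) < Fintype.card P := by
    exact_mod_cast Fintype.card_pos_iff.2 hQ.to_type
  have h_entropy := log_card_antichains_mul_le_sum_negMulLog Q
  rw [critExp_eq_sum_negMulLog_div, div_le_div_iff₀ hP_pos hQ_pos]
  simpa only [card_antichainsIn_of_linearOrder, card_antichains_of_linearOrder, Nat.cast_add,
    Nat.cast_one, add_sub_cancel_right] using h_entropy

end Chain

theorem stmt13_general (P : Type*) [Fintype P] [LinearOrder P] [Nonempty P] :
    (antichains P).card = Fintype.card P + 1 ∧
    critStar P = log (Fintype.card P + 1) / Fintype.card P ∧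
    IsWeighting (uniformWeighting P) ∧
    sInf {v : ℝ | ∃ Q : Set P, Q.Nonempty ∧ v = critExp (uniformWeighting P) Q} =
      log (Fintype.card P + 1) / Fintype.card P := by
  have hu : IsWeighting (uniformWeighting P) := isWeighting_uniformWeighting
  have h_le : ∀ Q : Set P, Q.Nonempty →
      log (antichains P).card / Fintype.card P ≤ critExp (uniformWeighting P) Q :=
    fun _ => log_card_antichains_div_le_critExp
  have h_cast : ((antichains P).card : ℝ) = Fintype.card P + 1 := by
    exact_mod_cast card_antichains_of_linearOrder (P := P)
  rw [← h_cast]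
  exact ⟨card_antichains_of_linearOrder, hu.critStar_eq_of_forall_le_critExp h_le, hu,
    hu.sInf_critExp_eq_of_forall_le_critExp h_le⟩

/-- For every `t ≥ 2`, the chain `C_t` (modelled as `Fin t` with its linear order) has
`a(C_t) = t + 1` antichains, satisfies `c_⋆(C_t) = log(t+1)/t = log(a(C_t))/|C_t|`
(so `C_t` is uniformly balanced), and the maximum in the definition of `c_⋆(C_t)` is
attained at the uniform weighting `u ≡ 1/(t+1)` on the antichains:
`min_{∅ ≠ Q ⊆ C_t} c_{u,C_t}(Q) = log(t+1)/t`. -/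
theorem stmt13 (t : ℕ) (ht : 2 ≤ t) :
    (antichains (Fin t)).card = t + 1 ∧
    critStar (Fin t) = Real.log (t + 1) / t ∧
    (letI u : Finset (Fin t) → ℝ :=
      fun A => if A ∈ antichains (Fin t) then 1 / ((t : ℝ) + 1) else 0
     IsWeighting u ∧
       sInf {v : ℝ | ∃ Q : Set (Fin t), Q.Nonempty ∧ v = critExp u Q} =
         Real.log (t + 1) / t) := by
  have : Nonempty (Fin t) := ⟨⟨0, by lia⟩⟩
  simpa only [uniformWeighting_of_linearOrder, Fintype.card_fin] using stmt13_general (Fin t)
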